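/- There is a computable function f from context-free grammars over the two-letter alphabet {b, c} (without ε-rules) to sequents of L⁺_ω such that for every such grammar G, the language generated by G includes (b⁺c⁺)⁺ = { b^{m₁} c^{k₁} … b^{mₙ} c^{kₙ} | n ≥ 1, all mᵢ, kⱼ ≥ 1 } if and only if the sequent f(G) is derivable in L⁺_ω. -/

import Mathlib

/-- Types (formulae) of the Lambek calculus with positive iteration:
primitive types, product `mul`, left division `ldiv A B = A \ B`,
right division `rdiv B A = B / A`, and positive iteration `plus A = A⁺`. -/
inductive Fm : Type where
  | pr : ℕ → Fm
  | mul : Fm → Fm → Fm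
  | ldiv : Fm → Fm → Fm   -- `ldiv A B` is `A \ B`
  | rdiv : Fm → Fm → Fm   -- `rdiv B A` is `B / A`
  | plus : Fm → Fm

/-- Derivability in the infinitary calculus L⁺_ω.  `DerLw P A` means the sequent
`P → A` is derivable.  Derivations are well-founded trees; the rule `plus_l`
is the ω-rule with infinitely many premises. -/
inductive DerLw : List Fm → Fm → Prop where
  | ax (A : Fm) : DerLw [A] A
  | ldiv_r {P : List Fm} {A B : Fm} (hne : P ≠ []) :
      DerLw (A :: P) B → DerLw P (Fm.ldiv A B)
  | ldiv_l {P Γ Δ : List Fm} {A B C : Fm} :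
      DerLw P A → DerLw (Γ ++ B :: Δ) C →
      DerLw (Γ ++ P ++ Fm.ldiv A B :: Δ) C
  | rdiv_r {P : List Fm} {A B : Fm} (hne : P ≠ []) :
      DerLw (P ++ [A]) B → DerLw P (Fm.rdiv B A)
  | rdiv_l {P Γ Δ : List Fm} {A B C : Fm} :
      DerLw P A → DerLw (Γ ++ B :: Δ) C →
      DerLw (Γ ++ Fm.rdiv B A :: (P ++ Δ)) C
  | mul_r {Γ Δ : List Fm} {A B : Fm} :
      DerLw Γ A → DerLw Δ B → DerLw (Γ ++ Δ) (Fm.mul A B)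
  | mul_l {Γ Δ : List Fm} {A B C : Fm} :
      DerLw (Γ ++ A :: B :: Δ) C → DerLw (Γ ++ Fm.mul A B :: Δ) C
  | plus_r {A : Fm} (Ps : List (List Fm)) (hne : Ps ≠ []) :
      (∀ P ∈ Ps, DerLw P A) → DerLw Ps.flatten (Fm.plus A)
  | plus_l {Γ Δ : List Fm} {A C : Fm} :
      (∀ n : ℕ, 1 ≤ n → DerLw (Γ ++ List.replicate n A ++ Δ) C) →
      DerLw (Γ ++ Fm.plus A :: Δ) C

/-- Symbols of a context-free grammar over the two-letter alphabet `Bool`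
(`false` plays the role of `b`, `true` of `c`): terminals are `Sum.inl`,
nonterminals (numbered by naturals) are `Sum.inr`. -/
abbrev GSym : Type := Bool ⊕ ℕ

/-- A context-free grammar over `{b, c}`: a start nonterminal together with a
finite list of rules, each rewriting a nonterminal to a string of symbols. -/
abbrev CFG : Type := ℕ × List (ℕ × List GSym)

/-- One rewriting step of the grammar `G`. -/
def CFGStep (G : CFG) (x y : List GSym) : Prop :=
  ∃ r ∈ G.2, ∃ p q : List GSym, x = p ++ Sum.inr r.1 :: q ∧ y = p ++ r.2 ++ q

/-- The language generated by the grammar `G`. -/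
def Lang (G : CFG) : Set (List Bool) :=
  { w | Relation.ReflTransGen (CFGStep G) [Sum.inr G.1] (w.map Sum.inl) }

/-- `G` has no ε-rules. -/
def EpsFree (G : CFG) : Prop := ∀ r ∈ G.2, r.2 ≠ []

/-- The language `(b⁺c⁺)⁺ = { b^{m₁} c^{k₁} … b^{mₙ} c^{kₙ} | n ≥ 1, mᵢ, kⱼ ≥ 1 }`
over `{b, c}` (with `b = false`, `c = true`). -/
def AltLang : Set (List Bool) :=
  { w | ∃ l : List (ℕ × ℕ), l ≠ [] ∧ (∀ p ∈ l, 1 ≤ p.1 ∧ 1 ≤ p.2) ∧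
      w = (l.map fun p => List.replicate p.1 false ++ List.replicate p.2 true).flatten }

/-- A fixed effective Gödel numbering of types. -/
def encodeFm : Fm → ℕ
  | Fm.pr n => Nat.pair 0 n
  | Fm.mul A B => Nat.pair 1 (Nat.pair (encodeFm A) (encodeFm B))
  | Fm.ldiv A B => Nat.pair 2 (Nat.pair (encodeFm A) (encodeFm B))
  | Fm.rdiv A B => Nat.pair 3 (Nat.pair (encodeFm A) (encodeFm B))
  | Fm.plus A => Nat.pair 4 (encodeFm A)

/-- A fixed effective Gödel numbering of sequents `S.1 → S.2`. -/
def encodeSeq (S : List Fm × Fm) : ℕ :=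
  Nat.pair (Encodable.encode (S.1.map encodeFm)) (encodeFm S.2)

/-!
The sequent of a grammar is `start, code S, (block_b⁺ · block_c⁺)⁺ → start`, where the block of a
letter announces that letter and then offers a fixed list of rules.  A context `v` counts as a
phrase of category `X` when `start, code X, v → start` is derivable, and a rule in a block may
either combine the phrases ending at that block into a larger one or be skipped.

* Every rule is used at most once per block, whereas a constituent may end after arbitrarily many
  nested constituents.  Passing to the right-corner transform of the grammar, in which `A/X` derives
  the words `u` such that `A ⇒ u X`, leaves only unit rules to be iterated at the end of a
  constituent, and no chain of unit rules has to repeat one of them.  Four rounds of a list that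
  contains the rules in every order are therefore enough.
* Conversely, types are interpreted by languages of stack traces in which `call X` opens a
  constituent, `leaf X` supplies one and `fire r` applies a rule.  In a trace that is a single call
  followed by the tokens of the blocks, the letters are generated by the grammar.
-/

namespace AltReduction

open List

section Languages

variable {ι α β : Type*}

/-- The positive iteration `L⁺` of a language. -/
def pos (L : Language α) : Language α := ⨆ n : ℕ, L ^ (n + 1)

theorem pow_le_pos {L : Language α} {n : ℕ} (hn : n ≠ 0) : L ^ n ≤ pos L := by
  obtain ⟨n, rfl⟩ := Nat.exists_eq_succ_of_ne_zero hn
  exact le_iSup (fun n : ℕ => L ^ (n + 1)) n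

theorem mem_pos_iff_exists_pow {L : Language α} {v : List α} :
    v ∈ pos L ↔ ∃ n, 1 ≤ n ∧ v ∈ L ^ n := by
  refine ⟨fun h => ?_, fun ⟨n, hn, h⟩ => pow_le_pos (Nat.one_le_iff_ne_zero.1 hn) h⟩
  obtain ⟨n, h⟩ := Language.mem_iSup.1 h
  exact ⟨n + 1, Nat.le_add_left 1 n, h⟩

theorem mem_pos_iff {L : Language α} {v : List α} :
    v ∈ pos L ↔ ∃ S : List (List α), S ≠ [] ∧ v = S.flatten ∧ ∀ y ∈ S, y ∈ L := by
  simp only [mem_pos_iff_exists_pow, Language.mem_pow]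
  constructor
  · rintro ⟨_, hn, S, rfl, rfl, h⟩
    exact ⟨S, length_pos_iff.1 hn, rfl, h⟩
  · rintro ⟨S, hne, rfl, h⟩
    exact ⟨_, length_pos_iff.2 hne, S, rfl, rfl, h⟩

theorem pos_mono {K L : Language α} (h : K ≤ L) : pos K ≤ pos L :=
  iSup_mono fun n => pow_le_pow_left' h (n + 1)

theorem mul_pos_mul (K L M : Language α) :
    K * pos L * M = ⨆ n : ℕ, K * L ^ (n + 1) * M := by
  rw [pos, Language.mul_iSup, Language.iSup_mul]

theorem mem_pos_singleton {x v : List α} :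
    v ∈ pos {x} ↔ ∃ n, 1 ≤ n ∧ v = (replicate n x).flatten := by
  simp only [mem_pos_iff_exists_pow, Language.mem_pow]
  constructor
  · rintro ⟨n, hn, S, rfl, hS, h⟩
    exact ⟨n, hn, by rw [eq_replicate_iff.2 ⟨hS, h⟩]⟩
  · rintro ⟨n, hn, rfl⟩
    exact ⟨n, hn, _, rfl, length_replicate, fun y hy => eq_of_mem_replicate hy⟩

/-- The words whose concatenation to any word of `A` lies in `B`. -/
def leftResidual (A B : Language α) : Language α := {v | ∀ u ∈ A, u ++ v ∈ B}

/-- The words to which any word of `A` can be appended with result in `B`. -/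
def rightResidual (B A : Language α) : Language α := {v | ∀ u ∈ A, v ++ u ∈ B}

theorem le_leftResidual_iff {A B C : Language α} : C ≤ leftResidual A B ↔ A * C ≤ B := by
  constructor
  · rintro h _ ⟨u, hu, v, hv, rfl⟩
    exact h hv u hu
  · exact fun h v hv u hu => h (Language.append_mem_mul hu hv)

theorem le_rightResidual_iff {A B C : Language α} : C ≤ rightResidual B A ↔ C * A ≤ B := by
  constructor
  · rintro h _ ⟨u, hu, v, hv, rfl⟩
    exact h hu v hv
  · exact fun h v hv u hu => h (Language.append_mem_mul hv hu)

theorem map_mem_prod {L : ι → Language α} {f : ι → α} {l : List ι} (h : ∀ i ∈ l, [f i] ∈ L i) :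
    l.map f ∈ (l.map L).prod := by
  induction l with
  | nil => exact Language.mem_one _ |>.2 rfl
  | cons i l ih =>
    exact Language.append_mem_mul (a := [f i]) (h i mem_cons_self)
      (ih fun j hj => h j (mem_cons_of_mem _ hj))

theorem flatMap_mem_prod {K : ι → Language α} {L : ι → Language β} (g : α → List β)
    (h : ∀ i, ∀ w ∈ K i, w.flatMap g ∈ L i) {l : List ι} {w : List α} (hw : w ∈ (l.map K).prod) :
    w.flatMap g ∈ (l.map L).prod := by
  induction l generalizing w with
  | nil =>
    obtain rfl : w = [] := hw
    exact Language.mem_one _ |>.2 rfl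
  | cons i l ih =>
    obtain ⟨u, hu, v, hv, rfl⟩ := hw
    rw [flatMap_append]
    exact Language.append_mem_mul (h i u hu) (ih hv)

theorem flatMap_flatten (g : α → List β) (S : List (List α)) :
    S.flatten.flatMap g = (S.map fun w => w.flatMap g).flatten := by
  simp only [flatMap_def, map_flatten, flatten_flatten, map_map, Function.comp_def]

theorem exists_mem_altLang_flatMap_iff {g : Bool → List β} {v : List β} :
    (∃ w ∈ AltLang, w.flatMap g = v) ↔ v ∈ pos (pos {g false} * pos {g true}) := by
  have group_iff (y : List β) : y ∈ pos {g false} * pos {g true} ↔ ∃ p : ℕ × ℕ,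
      (replicate p.1 false ++ replicate p.2 true).flatMap g = y ∧ 1 ≤ p.1 ∧ 1 ≤ p.2 := by
    simp only [Language.mem_mul, mem_pos_singleton, flatMap_append, flatMap_replicate]
    constructor
    · rintro ⟨_, ⟨m, hm, rfl⟩, _, ⟨k, hk, rfl⟩, rfl⟩
      exact ⟨(m, k), rfl, hm, hk⟩
    · rintro ⟨p, rfl, hm, hk⟩
      exact ⟨_, ⟨_, hm, rfl⟩, _, ⟨_, hk, rfl⟩, rfl⟩
  simp only [mem_pos_iff, group_iff]
  constructor
  · rintro ⟨_, ⟨l, hne, hl, rfl⟩, rfl⟩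
    refine ⟨l.map fun p => (replicate p.1 false ++ replicate p.2 true).flatMap g,
      by simpa using hne, ?_, ?_⟩
    · rw [flatMap_flatten, map_map]
      rfl
    · exact forall_mem_map.2 fun p hp => ⟨p, rfl, hl p hp⟩
  · rintro ⟨S, hne, rfl, hS⟩
    choose! p hp hpos using hS
    refine ⟨_, ⟨S.map p, by simpa using hne, forall_mem_map.2 hpos, rfl⟩, ?_⟩
    rw [flatMap_flatten, map_map, map_map]
    exact congrArg flatten ((map_congr_left hp).trans (map_id' S))

end Languages

section Calculus

/-- The antecedents from which a type is derivable. -/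
def antecedents (A : Fm) : Language Fm := {Γ | DerLw Γ A}

theorem derLw_foldl_mul {Γ v Fs : List Fm} {F : Fm} (hF : DerLw Γ F)
    (hv : v ∈ (Fs.map antecedents).prod) : DerLw (Γ ++ v) (Fs.foldl .mul F) := by
  induction Fs generalizing Γ v F with
  | nil =>
    obtain rfl : v = [] := hv
    simpa using hF
  | cons A Fs ih =>
    obtain ⟨u, hu, v, hv, rfl⟩ := hv
    rw [← append_assoc]
    exact ih (hF.mul_r hu) hv

theorem derLw_foldl_mul_left {Γ Δ Fs : List Fm} {F C : Fm} (h : DerLw (Γ ++ F :: (Fs ++ Δ)) C) :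
    DerLw (Γ ++ Fs.foldl .mul F :: Δ) C := by
  induction Fs generalizing F with
  | nil => exact h
  | cons A Fs ih => exact ih (.mul_l h)

/-- A type is covered by a language of contexts if, inside any antecedent, it may be replaced
by these contexts: a sequent is derivable as soon as all sequents so obtained are. -/
def Covers (A : Fm) (K : Language Fm) : Prop :=
  ∀ ⦃Γ Δ : List Fm⦄ ⦃C : Fm⦄, (∀ v ∈ K, DerLw (Γ ++ v ++ Δ) C) → DerLw (Γ ++ A :: Δ) C

variable {A B : Fm} {K L : Language Fm}

theorem Covers.mul (hA : Covers A K) (hB : Covers B L) : Covers (.mul A B) (K * L) := by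
  intro Γ Δ C h
  refine .mul_l (hA fun u hu => ?_)
  refine hB fun v hv => ?_
  simpa only [append_assoc] using h _ (Language.append_mem_mul hu hv)

theorem Covers.derLw_replicate (hA : Covers A K) {n : ℕ} {Γ Δ : List Fm} {C : Fm}
    (h : ∀ v ∈ K ^ n, DerLw (Γ ++ v ++ Δ) C) : DerLw (Γ ++ replicate n A ++ Δ) C := by
  induction n generalizing Γ with
  | zero => exact h [] (Language.mem_one _ |>.2 rfl)
  | succ n ih =>
    rw [replicate_succ, append_assoc, cons_append]
    refine hA fun u hu => ?_
    rw [← append_assoc]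
    refine ih fun v hv => ?_
    have huv : u ++ v ∈ K ^ (n + 1) := by
      rw [pow_succ']
      exact Language.append_mem_mul hu hv
    simpa only [append_assoc] using h _ huv

theorem Covers.plus (hA : Covers A K) : Covers (.plus A) (pos K) := fun _ _ _ h =>
  .plus_l fun _ hn => hA.derLw_replicate fun v hv =>
    h v (pow_le_pos (Nat.one_le_iff_ne_zero.1 hn) hv)

theorem covers_foldl_mul (F : Fm) (Fs : List Fm) : Covers (Fs.foldl .mul F) {F :: Fs} :=
  fun _ _ _ h => derLw_foldl_mul_left (by simpa using h _ rfl)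

end Calculus

section Interpretation

variable {α : Type*}

/-- The interpretation of types as languages induced by a valuation of the primitive types. -/
def sem (val : ℕ → Language α) : Fm → Language α
  | .pr n => val n
  | .mul A B => sem val A * sem val B
  | .ldiv A B => leftResidual (sem val A) (sem val B)
  | .rdiv B A => rightResidual (sem val B) (sem val A)
  | .plus A => pos (sem val A)

theorem prod_map_flatten_le_pow {M : Type*} {f : M → Language α} {L : Language α}
    {Ps : List (List M)} (h : ∀ P ∈ Ps, (P.map f).prod ≤ L) :
    (Ps.flatten.map f).prod ≤ L ^ Ps.length := by
  rw [map_flatten, prod_flatten, map_map]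
  exact (prod_le_pow_card _ _ (forall_mem_map.2 h)).trans_eq (by rw [length_map])

variable (val : ℕ → Language α)

theorem sem_sound {Γ : List Fm} {A : Fm} (h : DerLw Γ A) :
    (Γ.map (sem val)).prod ≤ sem val A := by
  induction h with
  | ax A => simp
  | ldiv_r _ _ ih => exact le_leftResidual_iff.2 (by simpa using ih)
  | rdiv_r _ _ ih => exact le_rightResidual_iff.2 (by simpa using ih)
  | @ldiv_l P Γ Δ A B _ _ _ ih₁ ih₂ =>
    have hdiv : (P.map (sem val)).prod * sem val (.ldiv A B) ≤ sem val B :=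
      (mul_le_mul_left ih₁ _).trans (le_leftResidual_iff.1 le_rfl)
    calc ((Γ ++ P ++ .ldiv A B :: Δ).map (sem val)).prod
        = (Γ.map (sem val)).prod * ((P.map (sem val)).prod * sem val (.ldiv A B)) *
            (Δ.map (sem val)).prod := by simp [mul_assoc]
      _ ≤ (Γ.map (sem val)).prod * sem val B * (Δ.map (sem val)).prod := by gcongr
      _ = ((Γ ++ B :: Δ).map (sem val)).prod := by simp [mul_assoc]
      _ ≤ _ := ih₂
  | @rdiv_l P Γ Δ A B _ _ _ ih₁ ih₂ =>
    have hdiv : sem val (.rdiv B A) * (P.map (sem val)).prod ≤ sem val B :=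
      (mul_le_mul_right ih₁ _).trans (le_rightResidual_iff.1 le_rfl)
    calc ((Γ ++ .rdiv B A :: (P ++ Δ)).map (sem val)).prod
        = (Γ.map (sem val)).prod * (sem val (.rdiv B A) * (P.map (sem val)).prod) *
            (Δ.map (sem val)).prod := by simp [mul_assoc]
      _ ≤ (Γ.map (sem val)).prod * sem val B * (Δ.map (sem val)).prod := by gcongr
      _ = ((Γ ++ B :: Δ).map (sem val)).prod := by simp [mul_assoc]
      _ ≤ _ := ih₂
  | mul_r _ _ ih₁ ih₂ =>
    rw [map_append, prod_append]
    exact mul_le_mul' ih₁ ih₂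
  | mul_l _ ih => simpa [sem, mul_assoc] using ih
  | plus_r Ps hne _ ih =>
    exact (prod_map_flatten_le_pow ih).trans (pow_le_pos (mt length_eq_zero_iff.1 hne))
  | @plus_l Γ Δ A _ _ ih =>
    rw [map_append, map_cons, prod_append, prod_cons, ← mul_assoc, sem, mul_pos_mul]
    refine iSup_le fun n => ?_
    simpa [mul_assoc] using ih (n + 1) (Nat.le_add_left 1 n)

theorem sem_foldl_mul (F : Fm) (Fs : List Fm) :
    sem val (Fs.foldl .mul F) = sem val F * (Fs.map (sem val)).prod := by
  induction Fs generalizing F with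
  | nil => simp
  | cons A Fs ih => rw [foldl_cons, ih, sem, map_cons, prod_cons, mul_assoc]

end Interpretation

section Grammars

/-- The productions `A → X₁ … Xₙ` over the alphabet `α` and the nonterminals `κ`. -/
abbrev Production (α κ : Type*) : Type _ := κ × List (α ⊕ κ)

variable {α κ : Type*} {P : List (Production α κ)}

/-- `Gen P Xs w` means that the productions `P` derive the word `w` from the string `Xs`. -/
inductive Gen (P : List (Production α κ)) : List (α ⊕ κ) → List α → Prop where
  | nil : Gen P [] []
  | letter {a : α} {Xs : List (α ⊕ κ)} {w : List α} :
      Gen P Xs w → Gen P (.inl a :: Xs) (a :: w)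
  | rule {r : Production α κ} {Xs : List (α ⊕ κ)} {u v : List α} :
      r ∈ P → Gen P r.2 u → Gen P Xs v → Gen P (.inr r.1 :: Xs) (u ++ v)

namespace Gen

variable {Xs Ys : List (α ⊕ κ)} {u v w : List α}

theorem append (hu : Gen P Xs u) (hv : Gen P Ys v) : Gen P (Xs ++ Ys) (u ++ v) := by
  induction hu with
  | nil => exact hv
  | letter _ ih => exact .letter ih
  | rule hr h₁ _ _ ih => simpa using Gen.rule hr h₁ ih

theorem split (h : Gen P (Xs ++ Ys) w) : ∃ u v, Gen P Xs u ∧ Gen P Ys v ∧ u ++ v = w := by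
  induction Xs generalizing w with
  | nil => exact ⟨[], w, .nil, h, rfl⟩
  | cons X Xs ih =>
    cases h with
    | letter h =>
      obtain ⟨u, v, hu, hv, rfl⟩ := ih h
      exact ⟨_, v, .letter hu, hv, rfl⟩
    | rule hr h₁ h =>
      obtain ⟨u, v, hu, hv, rfl⟩ := ih h
      exact ⟨_, v, .rule hr h₁ hu, hv, append_assoc ..⟩

theorem letters (w : List α) : Gen P (w.map .inl) w := by
  induction w with
  | nil => exact .nil
  | cons a w ih => exact .letter ih

theorem of_production {r : Production α κ} (hr : r ∈ P) (h : Gen P r.2 w) :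
    Gen P [.inr r.1] w := by
  simpa using Gen.rule hr h .nil

theorem mem_prod {ℒ : α ⊕ κ → Language α} (hletter : ∀ a, [a] ∈ ℒ (.inl a))
    (hrule : ∀ r ∈ P, (r.2.map ℒ).prod ≤ ℒ (.inr r.1)) (h : Gen P Xs w) :
    w ∈ (Xs.map ℒ).prod := by
  induction h with
  | nil => exact Language.mem_one _ |>.2 rfl
  | @letter a _ _ _ ih => exact Language.append_mem_mul (hletter a) ih
  | rule hr _ _ ih₁ ih₂ => exact Language.append_mem_mul (hrule _ hr ih₁) ih₂

theorem mem_of_singleton {ℒ : α ⊕ κ → Language α} (hletter : ∀ a, [a] ∈ ℒ (.inl a))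
    (hrule : ∀ r ∈ P, (r.2.map ℒ).prod ≤ ℒ (.inr r.1)) {X : α ⊕ κ} (h : Gen P [X] w) :
    w ∈ ℒ X := by
  simpa using h.mem_prod hletter hrule

end Gen

/-- The language derived from a string of symbols. -/
def genLang (P : List (Production α κ)) (Xs : List (α ⊕ κ)) : Language α := {w | Gen P Xs w}

theorem genLang_append (Xs Ys : List (α ⊕ κ)) :
    genLang P (Xs ++ Ys) = genLang P Xs * genLang P Ys := by
  refine Set.ext fun w => ⟨fun h => ?_, ?_⟩
  · obtain ⟨u, v, hu, hv, rfl⟩ := Gen.split h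
    exact Language.append_mem_mul hu hv
  · rintro ⟨u, hu, v, hv, rfl⟩
    exact Gen.append hu hv

theorem genLang_eq_prod (Xs : List (α ⊕ κ)) :
    genLang P Xs = (Xs.map fun X => genLang P [X]).prod := by
  induction Xs with
  | nil =>
    refine Set.ext fun w => ⟨fun h => ?_, ?_⟩
    · cases h
      exact Language.mem_one _ |>.2 rfl
    · rintro rfl
      exact .nil
  | cons X Xs ih => rw [map_cons, prod_cons, ← ih, ← genLang_append, singleton_append]

theorem cfgStep_append_left {G : CFG} {x y : List GSym} (z : List GSym) (h : CFGStep G x y) :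
    CFGStep G (z ++ x) (z ++ y) := by
  obtain ⟨r, hr, p, q, rfl, rfl⟩ := h
  exact ⟨r, hr, z ++ p, q, by simp, by simp⟩

theorem cfgStep_append_right {G : CFG} {x y : List GSym} (z : List GSym) (h : CFGStep G x y) :
    CFGStep G (x ++ z) (y ++ z) := by
  obtain ⟨r, hr, p, q, rfl, rfl⟩ := h
  exact ⟨r, hr, p, q ++ z, by simp, by simp⟩

theorem gen_iff_reflTransGen {G : CFG} {Xs : List GSym} {w : List Bool} :
    Gen G.2 Xs w ↔ Relation.ReflTransGen (CFGStep G) Xs (w.map .inl) := by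
  constructor
  · intro h
    induction h with
    | nil => exact .refl
    | letter _ ih => exact ih.lift ([_] ++ ·) (fun _ _ => cfgStep_append_left [_])
    | @rule r Xs u v hr _ _ ih₁ ih₂ =>
      rw [map_append]
      calc Relation.ReflTransGen (CFGStep G) (.inr r.1 :: Xs) (r.2 ++ Xs) :=
            .single ⟨r, hr, [], Xs, rfl, rfl⟩
        Relation.ReflTransGen (CFGStep G) _ (u.map .inl ++ Xs) :=
            ih₁.lift (· ++ Xs) fun _ _ => cfgStep_append_right Xs
        Relation.ReflTransGen (CFGStep G) _ (u.map .inl ++ v.map .inl) :=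
            ih₂.lift (u.map .inl ++ ·) fun _ _ => cfgStep_append_left _
  · intro h
    induction h using Relation.ReflTransGen.head_induction_on with
    | refl => exact .letters w
    | head hs _ ih =>
      obtain ⟨r, hr, p, q, rfl, rfl⟩ := hs
      obtain ⟨_, v, hpr, hv, rfl⟩ := ih.split
      obtain ⟨u₁, u₂, hu₁, hu₂, rfl⟩ := hpr.split
      rw [append_assoc]
      exact hu₁.append (.rule hr hu₂ hv)

theorem mem_lang_iff {G : CFG} {w : List Bool} : w ∈ Lang G ↔ Gen G.2 [.inr G.1] w :=
  gen_iff_reflTransGen.symm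

end Grammars

section RightCorner

variable {α κ : Type*} {P : List (Production α κ)} {A : κ} {β : List (α ⊕ κ)} {X : α ⊕ κ}

/-- The nonterminals of the right-corner transform: those of the grammar, and the pairs `(A, X)`,
written `A/X`, for the words `u` such that `A ⇒ u X`. -/
abbrev RCNonterminal (α κ : Type*) : Type _ := κ ⊕ κ × (α ⊕ κ)

/-- The symbol `A/X` of the right-corner transform. -/
abbrev slash (A : κ) (X : α ⊕ κ) : α ⊕ RCNonterminal α κ := .inr (.inr (A, X))

/-- A symbol of the grammar as a symbol of its right-corner transform. -/
abbrev sym : α ⊕ κ → α ⊕ RCNonterminal α κ := Sum.map id .inl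

/-- The triples `(A, β, X)` such that `A → β X` is a production. -/
def splitLast (P : List (Production α κ)) : List (κ × List (α ⊕ κ) × (α ⊕ κ)) :=
  P.filterMap fun r => r.2.getLast?.map fun X => (r.1, r.2.dropLast, X)

theorem mem_splitLast : (A, β, X) ∈ splitLast P ↔ (A, β ++ [X]) ∈ P := by
  simp only [splitLast, mem_filterMap, Option.map_eq_some_iff, Prod.mk.injEq]
  constructor
  · rintro ⟨⟨_, _⟩, hr, _, hX, rfl, rfl, rfl⟩
    rwa [dropLast_append_getLast? _ hX]
  · exact fun h => ⟨_, h, X, by simp, rfl, by simp, rfl⟩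

/-- The right-corner transform of a list of productions.  A production `A → β X` gives rise to
`A → β X` and `A/X → β`, and for every left-hand side `B` to `B → (B/X) X` and `B/X → (B/A) β`. -/
def rightCorner (P : List (Production α κ)) : List (Production α (RCNonterminal α κ)) :=
  (splitLast P).flatMap fun t =>
    (.inl t.1, t.2.1.map sym ++ [sym t.2.2]) :: (.inr (t.1, t.2.2), t.2.1.map sym) ::
      (P.map Prod.fst).flatMap fun B =>
        [(.inl B, [slash B t.2.2, sym t.2.2]),
          (.inr (B, t.2.2), slash B (.inr t.1) :: t.2.1.map sym)]

theorem mem_rightCorner {r : Production α (RCNonterminal α κ)} :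
    r ∈ rightCorner P ↔ ∃ A β X, (A, β ++ [X]) ∈ P ∧
      (r = (.inl A, β.map sym ++ [sym X]) ∨ r = (.inr (A, X), β.map sym) ∨
        ∃ B ∈ P.map Prod.fst, r = (.inl B, [slash B X, sym X]) ∨
          r = (.inr (B, X), slash B (.inr A) :: β.map sym)) := by
  simp only [rightCorner, mem_flatMap, Prod.exists, mem_splitLast, mem_cons, not_mem_nil, or_false]

theorem lift_mem_rightCorner (h : (A, β ++ [X]) ∈ P) :
    (.inl A, β.map sym ++ [sym X]) ∈ rightCorner P :=
  mem_rightCorner.2 ⟨A, β, X, h, .inl rfl⟩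

theorem open_mem_rightCorner (h : (A, β ++ [X]) ∈ P) :
    (.inr (A, X), β.map sym) ∈ rightCorner P :=
  mem_rightCorner.2 ⟨A, β, X, h, .inr (.inl rfl)⟩

theorem close_mem_rightCorner (h : (A, β ++ [X]) ∈ P) {B : κ} (hB : B ∈ P.map Prod.fst) :
    (.inl B, [slash B X, sym X]) ∈ rightCorner P :=
  mem_rightCorner.2 ⟨A, β, X, h, .inr (.inr ⟨B, hB, .inl rfl⟩)⟩

theorem extend_mem_rightCorner (h : (A, β ++ [X]) ∈ P) {B : κ} (hB : B ∈ P.map Prod.fst) :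
    (.inr (B, X), slash B (.inr A) :: β.map sym) ∈ rightCorner P :=
  mem_rightCorner.2 ⟨A, β, X, h, .inr (.inr ⟨B, hB, .inr rfl⟩)⟩

/-- The language that the right-corner transform is meant to assign to each of its symbols. -/
def rightCornerLang (P : List (Production α κ)) : α ⊕ RCNonterminal α κ → Language α
  | .inl a => genLang P [.inl a]
  | .inr (.inl A) => genLang P [.inr A]
  | .inr (.inr (A, X)) => rightResidual (genLang P [.inr A]) (genLang P [X])

theorem rightCornerLang_sym (X : α ⊕ κ) : rightCornerLang P (sym X) = genLang P [X] := by
  cases X <;> rfl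

theorem prod_rightCornerLang_sym (β : List (α ⊕ κ)) :
    ((β.map sym).map (rightCornerLang P)).prod = genLang P β := by
  rw [map_map, genLang_eq_prod]
  exact congrArg prod (map_congr_left fun X _ => rightCornerLang_sym X)

theorem genLang_concat_le (h : (A, β ++ [X]) ∈ P) :
    genLang P β * genLang P [X] ≤ genLang P [.inr A] := by
  rw [← genLang_append]
  exact fun _ hw => Gen.of_production h hw

theorem prod_rightCornerLang_le {r : Production α (RCNonterminal α κ)} (hr : r ∈ rightCorner P) :
    (r.2.map (rightCornerLang P)).prod ≤ rightCornerLang P (.inr r.1) := by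
  have slash_mul_le (B : κ) (X : α ⊕ κ) :
      rightCornerLang P (slash B X) * genLang P [X] ≤ genLang P [.inr B] :=
    le_rightResidual_iff.1 le_rfl
  obtain ⟨A, β, X, h, rfl | rfl | ⟨B, -, rfl | rfl⟩⟩ := mem_rightCorner.1 hr
  · rw [map_append, prod_append, prod_rightCornerLang_sym, map_singleton, prod_singleton,
      rightCornerLang_sym]
    exact genLang_concat_le h
  · rw [prod_rightCornerLang_sym]
    exact le_rightResidual_iff.2 (genLang_concat_le h)
  · rw [map_cons, prod_cons, map_singleton, prod_singleton, rightCornerLang_sym]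
    exact slash_mul_le B X
  · rw [map_cons, prod_cons, prod_rightCornerLang_sym]
    refine le_rightResidual_iff.2 ?_
    rw [mul_assoc]
    exact (mul_le_mul_right (genLang_concat_le h) _).trans (slash_mul_le B (.inr A))

theorem Gen.of_rightCorner {w : List α} (h : Gen (rightCorner P) [.inr (.inl A)] w) :
    Gen P [.inr A] w :=
  h.mem_of_singleton (ℒ := rightCornerLang P) (fun a => Gen.letters [a])
    fun _ => prod_rightCornerLang_le

end RightCorner

section Rounds

variable {α κ : Type*} {R : List (Production α κ)} {r : Production α κ} {X Y : α ⊕ κ}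

/-- The list of productions in which each production of `R` stands between two copies of the list
built from the productions after it.  It contains every repetition-free sequence of elements of
`R` as a sublist. -/
def allOrders (R : List (Production α κ)) : List (Production α κ) :=
  R.foldr (fun r acc => acc ++ r :: acc) []

theorem allOrders_cons (r : Production α κ) (R : List (Production α κ)) :
    allOrders (r :: R) = allOrders R ++ r :: allOrders R := rfl

theorem mem_allOrders : r ∈ allOrders R ↔ r ∈ R := by
  induction R with
  | nil => rfl
  | cons s R ih =>
    simp only [allOrders_cons, mem_append, mem_cons, ih]
    tauto

/-- The concatenation of `k` copies of `allOrders R`. -/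
def rounds (R : List (Production α κ)) (k : ℕ) : List (Production α κ) :=
  (replicate k (allOrders R)).flatten

theorem rounds_succ (R : List (Production α κ)) (k : ℕ) :
    rounds R (k + 1) = rounds R k ++ allOrders R := by
  simp only [rounds, replicate_succ', flatten_append, flatten_singleton]

theorem rounds_subset (R : List (Production α κ)) (k : ℕ) : rounds R k ⊆ R := by
  intro r hr
  obtain ⟨_, hl, hr⟩ := mem_flatten.1 hr
  exact mem_allOrders.1 (eq_of_mem_replicate hl ▸ hr)

/-- `UnitChain R X Y` means that `X` results from `Y` by productions of `R` whose right-hand side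
is a single symbol. -/
def UnitChain (R : List (Production α κ)) : α ⊕ κ → α ⊕ κ → Prop :=
  Relation.ReflTransGen fun X Y => ∃ r ∈ R, r.2 = [X] ∧ .inr r.1 = Y

theorem unitChain_nil (h : UnitChain ([] : List (Production α κ)) X Y) : X = Y := by
  induction h with
  | refl => rfl
  | tail _ hs _ =>
    obtain ⟨_, hr, -⟩ := hs
    exact absurd hr not_mem_nil

theorem unitChain_cons (h : UnitChain (r :: R) X Y) :
    UnitChain R X Y ∨ ∃ Z, r.2 = [Z] ∧ UnitChain R X Z ∧ UnitChain R (.inr r.1) Y := by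
  induction h with
  | refl => exact .inl .refl
  | tail _ hs ih =>
    obtain ⟨s, hs, hs₂, rfl⟩ := hs
    rcases mem_cons.1 hs with rfl | hs
    · rcases ih with ih | ⟨Z, hZ, hX, -⟩
      · exact .inr ⟨_, hs₂, ih, .refl⟩
      · exact .inr ⟨Z, hZ, hX, .refl⟩
    · rcases ih with ih | ⟨Z, hZ, hX, hY⟩
      · exact .inl (ih.tail ⟨s, hs, hs₂, rfl⟩)
      · exact .inr ⟨Z, hZ, hX, hY.tail ⟨s, hs, hs₂, rfl⟩⟩

end Rounds

section Reduction

variable {α κ : Type*} [Encodable α] [Encodable κ]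

/-- The primitive type of a state of the parse in which no symbol is announced. -/
def start : Fm := .pr 0

/-- The primitive type announcing a phrase of category `X`. -/
def code (X : α ⊕ κ) : Fm := .pr (Encodable.encode X + 1)

/-- The type `(start · code X) \ start` of the phrases of category `X`. -/
def hat (X : α ⊕ κ) : Fm := .ldiv (.mul start (code X)) start

/-- For a production `A → X₁ … Xₙ`, the product of `code A` and the `hat Xᵢ`: the announcement
of `A` followed by phrases for the right-hand side. -/
def body (r : Production α κ) : Fm := (r.2.map hat).foldl .mul (code (.inr r.1 : α ⊕ κ))

/-- The type `((start · (body r)⁺) / body r) \ start`, at which the production `r` may be applied.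
The iteration `⁺` makes the application optional. -/
def trig (r : Production α κ) : Fm :=
  .ldiv (.rdiv (.mul start (.plus (body r))) (body r)) start

/-- The types attached to an occurrence of the letter `a`: a phrase of category `a`, followed by
the productions that may be applied after it. -/
def block (rs : List (Production α κ)) (a : α) : List Fm := hat (.inl a : α ⊕ κ) :: rs.map trig

/-- The product of the types of a block. -/
def blockFm (rs : List (Production α κ)) (a : α) : Fm :=
  (rs.map trig).foldl .mul (hat (.inl a : α ⊕ κ))

/-- The type `(blockFm rs b)⁺ · (blockFm rs c)⁺`. -/
def groupFm (rs : List (Production Bool κ)) : Fm :=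
  .mul (.plus (blockFm rs false)) (.plus (blockFm rs true))

/-- The sequent `start, code S, (groupFm rs)⁺ → start` of a grammar with start symbol `S`, where
`rs` consists of four rounds of the right-corner transform. -/
def toSequent (G : CFG) : List Fm × Fm :=
  ([start, code (sym (.inr G.1) : Bool ⊕ RCNonterminal Bool ℕ),
    .plus (groupFm (rounds (rightCorner G.2) 4))], start)

end Reduction

section Phrases

variable {α κ : Type*} [Encodable α] [Encodable κ] {X : α ⊕ κ}

/-- The contexts that act as a phrase of category `X`. -/
def phrases (X : α ⊕ κ) : Language Fm := {v | v ≠ [] ∧ DerLw (start :: code X :: v) start}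

theorem phrases_le_antecedents_hat : phrases X ≤ antecedents (hat X) := fun _ h =>
  .ldiv_r h.1 (.mul_l (Γ := []) h.2)

theorem hat_mem_phrases : [hat X] ∈ phrases X :=
  ⟨cons_ne_nil _ _, .ldiv_l (P := [start, code X]) (Γ := []) (Δ := [])
    (.mul_r (Γ := [start]) (.ax _) (.ax _)) (.ax _)⟩

theorem derLw_append_trig {Γ : List Fm} {r : Production α κ}
    (h : DerLw (Γ ++ [body r]) (.mul start (.plus (body r)))) (hΓ : Γ ≠ []) :
    DerLw (Γ ++ [trig r]) start :=
  .ldiv_l (P := Γ) (Γ := []) (Δ := []) (.rdiv_r hΓ h) (.ax _)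

theorem append_trig_mem_phrases {v : List Fm} (h : v ∈ phrases X) (r : Production α κ) :
    v ++ [trig r] ∈ phrases X := by
  have hplus : DerLw [body r] (.plus (body r)) := .plus_r [[body r]] (by simp) (by simp [DerLw.ax])
  exact ⟨by simp, derLw_append_trig (Γ := start :: code X :: v) (h.2.mul_r hplus) (by simp)⟩

theorem append_map_trig_mem_phrases {v : List Fm} (h : v ∈ phrases X)
    (rs : List (Production α κ)) : v ++ rs.map trig ∈ phrases X := by
  induction rs generalizing v with
  | nil => simpa using h
  | cons r rs ih => simpa using ih (append_trig_mem_phrases h r)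

theorem append_trig_mem_phrases_of_mem_prod {v : List Fm} {r : Production α κ}
    (h : v ∈ (r.2.map phrases).prod) : v ++ [trig r] ∈ phrases (.inr r.1 : α ⊕ κ) := by
  have hle : (r.2.map phrases).prod ≤ ((r.2.map hat).map antecedents).prod := by
    rw [map_map]
    exact prod_le_prod' fun _ _ => phrases_le_antecedents_hat
  have hbody : DerLw (code (.inr r.1 : α ⊕ κ) :: v) (body r) :=
    derLw_foldl_mul (Γ := [_]) (.ax _) (hle h)
  have hplus : DerLw (code (.inr r.1 : α ⊕ κ) :: v ++ [body r]) (.plus (body r)) := by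
    simpa using DerLw.plus_r [code (.inr r.1 : α ⊕ κ) :: v, [body r]] (by simp)
      (by simp [hbody, DerLw.ax])
  exact ⟨by simp, derLw_append_trig (Γ := start :: code (.inr r.1 : α ⊕ κ) :: v)
    (DerLw.mul_r (Γ := [start]) (.ax _) hplus) (by simp)⟩

end Phrases

section Parsing

variable {α κ : Type*} [Encodable α] [Encodable κ] {rs pre R : List (Production α κ)}
  {A : κ} {Xs : List (α ⊕ κ)} {X Y : α ⊕ κ} {v w : List α} {k : ℕ}

/-- The words that form a phrase of category `X` when every letter carries the productions `rs`,
except for the last one, which carries only `pre`. -/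
def parsedWith (rs pre : List (Production α κ)) (X : α ⊕ κ) : Language α :=
  {w | ∃ u a, w = u ++ [a] ∧ u.flatMap (block rs) ++ block pre a ∈ phrases X}

theorem flatMap_block_mem_phrases (h : w ∈ parsedWith rs rs X) :
    w.flatMap (block rs) ∈ phrases X := by
  obtain ⟨u, a, rfl, h⟩ := h
  simpa using h

theorem mem_parsedWith_append (sec : List (Production α κ)) (h : w ∈ parsedWith rs pre X) :
    w ∈ parsedWith rs (pre ++ sec) X := by
  obtain ⟨u, a, rfl, h⟩ := h
  exact ⟨u, a, rfl, by simpa [block] using append_map_trig_mem_phrases h sec⟩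

theorem append_mem_parsedWith (hv : v ∈ (Xs.map (parsedWith rs rs)).prod)
    (hw : w ∈ parsedWith rs pre X) :
    v ++ w ∈ parsedWith rs (pre ++ [(A, Xs ++ [X])]) (.inr A) := by
  obtain ⟨u, a, rfl, hw⟩ := hw
  have hv' : v.flatMap (block rs) ∈ (Xs.map phrases).prod :=
    flatMap_mem_prod _ (fun _ _ => flatMap_block_mem_phrases) hv
  have hvw : v.flatMap (block rs) ++ (u.flatMap (block rs) ++ block pre a) ∈
      ((Xs ++ [X]).map phrases).prod := by
    simpa using Language.append_mem_mul hv' hw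
  refine ⟨v ++ u, a, (append_assoc ..).symm, ?_⟩
  simpa [block] using append_trig_mem_phrases_of_mem_prod (r := (A, Xs ++ [X])) hvw

theorem append_mem_parsedWith_append {sec : List (Production α κ)} (hr : (A, Xs ++ [X]) ∈ sec)
    (hv : v ∈ (Xs.map (parsedWith rs rs)).prod) (hw : w ∈ parsedWith rs pre X) :
    v ++ w ∈ parsedWith rs (pre ++ sec) (.inr A) := by
  obtain ⟨s₁, s₂, rfl⟩ := append_of_mem hr
  simpa using mem_parsedWith_append s₂ (append_mem_parsedWith hv (mem_parsedWith_append s₁ hw))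

theorem mem_parsedWith_of_unitChain (h : UnitChain R X Y) (hw : w ∈ parsedWith rs pre X) :
    w ∈ parsedWith rs (pre ++ allOrders R) Y := by
  induction R generalizing pre X Y with
  | nil => exact mem_parsedWith_append _ (unitChain_nil h ▸ hw)
  | cons r R ih =>
    rw [allOrders_cons, ← append_assoc]
    rcases unitChain_cons h with h | ⟨Z, hZ, hX, hY⟩
    · exact mem_parsedWith_append _ (ih h hw)
    · rw [append_cons]
      refine ih hY ?_
      simpa [← hZ] using append_mem_parsedWith (A := r.1) (Xs := []) (v := []) (by simp) (ih hX hw)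

/-- The words that form a phrase of category `X` when every letter carries four rounds of `R`,
except for the last one, which carries `k` rounds. -/
def parsed (R : List (Production α κ)) (k : ℕ) : α ⊕ κ → Language α :=
  parsedWith (rounds R 4) (rounds R k)

/-- The words that lie in `parsed R k X` up to unit productions. -/
def parsedUpToUnits (R : List (Production α κ)) (k : ℕ) (X : α ⊕ κ) : Language α :=
  {w | ∃ Y, w ∈ parsed R k Y ∧ UnitChain R Y X}

theorem singleton_mem_parsed (a : α) : [a] ∈ parsed R 0 (.inl a) :=
  ⟨[], a, rfl, by simpa [block, rounds] using hat_mem_phrases⟩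

theorem parsed_mono : Monotone fun k => parsed R k X := by
  refine monotone_nat_of_le_succ fun k => ?_
  rw [parsed, parsed, rounds_succ R k]
  exact fun _ => mem_parsedWith_append _

theorem append_mem_parsed (hr : (A, Xs ++ [X]) ∈ R) (hv : v ∈ (Xs.map (parsed R 4)).prod)
    (hw : w ∈ parsed R k X) : v ++ w ∈ parsed R (k + 1) (.inr A) := by
  rw [parsed, rounds_succ R k]
  exact append_mem_parsedWith_append (mem_allOrders.2 hr) hv hw

theorem parsed_le_parsedUpToUnits : parsed R k X ≤ parsedUpToUnits R k X :=
  fun _ h => ⟨X, h, .refl⟩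

theorem parsedUpToUnits_le_parsed : parsedUpToUnits R k X ≤ parsed R (k + 1) X := by
  rintro w ⟨Y, hw, hY⟩
  rw [parsed, rounds_succ R k]
  exact mem_parsedWith_of_unitChain hY hw

theorem parsedUpToUnits_le_of_unit (hr : (A, [X]) ∈ R) :
    parsedUpToUnits R k X ≤ parsedUpToUnits R k (.inr A) :=
  fun _ ⟨Y, hw, hY⟩ => ⟨Y, hw, hY.tail ⟨_, hr, rfl, rfl⟩⟩

end Parsing

section Completeness

variable {α κ : Type*} [Encodable α] [Encodable κ] {P : List (Production α κ)} {A : κ}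
  {β : List (α ⊕ κ)} {X : α ⊕ κ} {v w : List α}

/-- The words that form a phrase of category `X` after one round, up to unit productions, and
that complete every phrase of a category `B/X` before them to a phrase of category `B`. -/
def completed (P : List (Production α κ)) (X : α ⊕ κ) : Language α :=
  {w | w ∈ parsedUpToUnits (rightCorner P) 1 (sym X) ∧
    ∀ A β, (A, β ++ [X]) ∈ P → ∀ B ∈ P.map Prod.fst,
      ∀ u ∈ parsedUpToUnits (rightCorner P) 3 (slash B X),
        u ++ w ∈ parsedUpToUnits (rightCorner P) 1 (sym (.inr B))}

theorem completed_le_parsed_two : completed P X ≤ parsed (rightCorner P) 2 (sym X) :=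
  fun _ h => parsedUpToUnits_le_parsed h.1

theorem completed_le_parsed_four : completed P X ≤ parsed (rightCorner P) 4 (sym X) :=
  completed_le_parsed_two.trans (parsed_mono (by norm_num))

theorem singleton_mem_completed (P : List (Production α κ)) (a : α) :
    [a] ∈ completed P (.inl a) := by
  have ha : [a] ∈ parsed (rightCorner P) 0 (sym (.inl a)) := singleton_mem_parsed a
  refine ⟨parsed_le_parsedUpToUnits (parsed_mono zero_le_one ha), fun A β h B hB u hu => ?_⟩
  refine parsed_le_parsedUpToUnits (append_mem_parsed (Xs := [slash B (.inl a)])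
    (close_mem_rightCorner h hB) ?_ ha)
  have hu' : u ∈ parsed (rightCorner P) 4 (slash B (.inl a)) := parsedUpToUnits_le_parsed hu
  simpa using hu'

theorem mem_completed_of_unit (h : (A, [X]) ∈ P) (hw : w ∈ completed P X) :
    w ∈ completed P (.inr A) :=
  ⟨parsedUpToUnits_le_of_unit (lift_mem_rightCorner (β := []) h) hw.1, fun _ _ _ B hB u hu =>
    hw.2 A [] h B hB u (parsedUpToUnits_le_of_unit (extend_mem_rightCorner (β := []) h hB) hu)⟩

theorem prod_completed_le (β : List (α ⊕ κ)) :
    (β.map (completed P)).prod ≤ ((β.map sym).map (parsed (rightCorner P) 4)).prod := by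
  rw [map_map]
  exact prod_le_prod' fun _ _ => completed_le_parsed_four

theorem append_mem_completed {Z : α ⊕ κ} {z : List α} (h : (A, β ++ [Z] ++ [X]) ∈ P)
    (hv : v ∈ (β.map (completed P)).prod) (hz : z ∈ completed P Z) (hw : w ∈ completed P X) :
    v ++ z ++ w ∈ completed P (.inr A) := by
  have hβ := prod_completed_le β hv
  have hZ := completed_le_parsed_two hz
  constructor
  · refine hw.2 A _ h A (mem_map_of_mem h) _ (parsed_le_parsedUpToUnits ?_)
    exact append_mem_parsed (by simpa using open_mem_rightCorner h) hβ hZ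
  · intro _ _ _ B hB u hu
    have huv : u ++ v ∈ ((slash B (.inr A) :: β.map sym).map (parsed (rightCorner P) 4)).prod :=
      Language.append_mem_mul (parsedUpToUnits_le_parsed hu) hβ
    have huvz : u ++ v ++ z ∈ parsed (rightCorner P) 3 (slash B X) :=
      append_mem_parsed (by simpa using extend_mem_rightCorner h hB) huv hZ
    simpa using hw.2 A _ h B hB _ (parsed_le_parsedUpToUnits huvz)

theorem prod_completed_le_of_mem {r : Production α κ} (hr : r ∈ P) (hne : r.2 ≠ []) :
    (r.2.map (completed P)).prod ≤ completed P (.inr r.1) := by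
  obtain ⟨A, Ys⟩ := r
  obtain ⟨β, X, rfl⟩ := (eq_nil_or_concat' Ys).resolve_left hne
  rcases eq_nil_or_concat' β with rfl | ⟨β, Z, rfl⟩
  · have hle : completed P X ≤ completed P (.inr A) := fun _ => mem_completed_of_unit hr
    simpa using hle
  · simp only [map_append, prod_append, map_singleton, prod_singleton]
    rintro _ ⟨_, ⟨v, hv, z, hz, rfl⟩, w, hw, rfl⟩
    exact append_mem_completed hr hv hz hw

theorem derLw_of_gen (hP : ∀ r ∈ P, r.2 ≠ []) (h : Gen P [X] w) :
    DerLw (start :: code (sym X) :: w.flatMap (block (rounds (rightCorner P) 4))) start := by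
  have hw : w ∈ completed P X :=
    h.mem_of_singleton (singleton_mem_completed P) fun r hr => prod_completed_le_of_mem hr (hP r hr)
  exact (flatMap_block_mem_phrases (completed_le_parsed_four hw)).2

theorem covers_groupFm (rs : List (Production Bool κ)) :
    Covers (groupFm rs) (pos {block rs false} * pos {block rs true}) :=
  (covers_foldl_mul (hat (.inl false : Bool ⊕ κ)) (rs.map trig)).plus.mul
    (covers_foldl_mul (hat (.inl true : Bool ⊕ κ)) (rs.map trig)).plus

theorem derLw_toSequent {G : CFG} (hG : EpsFree G) (h : AltLang ⊆ Lang G) :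
    DerLw (toSequent G).1 (toSequent G).2 := by
  refine (covers_groupFm _).plus (Γ := [_, _]) (Δ := []) fun v hv => ?_
  obtain ⟨w, hw, rfl⟩ := exists_mem_altLang_flatMap_iff.2 hv
  simpa [toSequent] using derLw_of_gen hG (mem_lang_iff.1 (h hw))

end Completeness

section Traces

variable {α κ : Type*} {R : List (Production α κ)} {r : Production α κ} {X : α ⊕ κ}
  {Xs : List (α ⊕ κ)} {o : Option (Production α κ)}

/-- The tokens of stack traces: `call X` opens a constituent of category `X`, `leaf X` supplies one
without analysing it, and `fire r` applies the production `r`. -/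
inductive Tok (α κ : Type*)
  | call (X : α ⊕ κ)
  | leaf (X : α ⊕ κ)
  | fire (r : Production α κ)

/-- The kinds of traces.  A trace of kind `state none` is balanced, in a trace of kind
`state (some r)` the calls of `r` may still wait for the token `fire r`, and a trace of kind
`args Xs` supplies the constituents `Xs` of a production. -/
inductive TraceKind (α κ : Type*)
  | state (o : Option (Production α κ))
  | args (Xs : List (α ⊕ κ))

open Tok TraceKind

/-- The stack traces of each kind for the productions `R`. -/
inductive Trace (R : List (Production α κ)) : TraceKind α κ → List (Tok α κ) → Prop
  | empty : Trace R (state none) []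
  | leaf (X : α ⊕ κ) : Trace R (state none) [call X, leaf X]
  | fire {r : Production α κ} {v : List (Tok α κ)} :
      Trace R (state (some r)) v → Trace R (state none) (v ++ [fire r])
  | append {o : Option (Production α κ)} {u v : List (Tok α κ)} :
      Trace R (state o) u → Trace R (state o) v → Trace R (state o) (u ++ v)
  | pending {r : Production α κ} {v : List (Tok α κ)} :
      Trace R (state none) v → Trace R (state (some r)) v
  | body {r : Production α κ} {m : List (Tok α κ)} :
      r ∈ R → Trace R (args r.2) m → Trace R (state (some r)) (call (.inr r.1) :: m)
  | nil : Trace R (args []) []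
  | cons {X : α ⊕ κ} {Xs : List (α ⊕ κ)} {v m : List (Tok α κ)} :
      Trace R (state none) (call X :: v) → Trace R (args Xs) m → Trace R (args (X :: Xs)) (v ++ m)

namespace Trace

variable {q u v x z m : List (Tok α κ)} {t : Tok α κ}

theorem last_token (h : Trace R (state none) (v ++ [t])) :
    (∃ r, t = Tok.fire r) ∨
      ∃ X u, t = Tok.leaf X ∧ v = u ++ [call X] ∧ Trace R (state none) u := by
  generalize hk : state none = k, hw : v ++ [t] = w at h
  induction h generalizing v with
  | leaf X =>
    obtain ⟨rfl, ht⟩ := append_inj' (show v ++ [t] = [call X] ++ [Tok.leaf X] from hw) rfl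
    exact .inr ⟨X, [], singleton_inj.1 ht, rfl, .empty⟩
  | @fire r =>
    obtain ⟨-, ht⟩ := append_inj' hw rfl
    exact .inl ⟨r, singleton_inj.1 ht⟩
  | @append o u₁ u₂ h₁ _ ih₁ ih₂ =>
    rcases eq_nil_or_concat' u₂ with rfl | ⟨u₂, s, rfl⟩
    · exact ih₁ hk (hw.trans (append_nil _))
    · obtain ⟨rfl, ht⟩ := append_inj' (hw.trans (append_assoc ..).symm) rfl
      obtain rfl := singleton_inj.1 ht
      refine (ih₂ hk rfl).imp_right ?_
      rintro ⟨X, u, rfl, rfl, hu⟩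
      cases hk
      exact ⟨X, u₁ ++ u, rfl, (append_assoc ..).symm, h₁.append hu⟩
  | empty => simp at hw
  | pending | body | nil | cons => simp at hk

theorem length_le (h : Trace R (args Xs) m) : Xs.length ≤ m.length := by
  generalize hk : args Xs = k at h
  induction h generalizing Xs with
  | nil =>
    cases hk
    exact le_rfl
  | @cons X Xs v m hv _ _ ih =>
    cases hk
    have hne : v ≠ [] := by
      rintro rfl
      rcases last_token (v := []) hv with ⟨_, h⟩ | ⟨_, _, h, -⟩ <;> cases h
    have hv_pos := length_pos_iff.2 hne
    have hXs_le := ih rfl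
    simp only [length_cons, length_append]
    omega
  | _ => simp at hk

theorem args_map_leaf (Xs : List (α ⊕ κ)) : Trace R (args Xs) (Xs.map Tok.leaf) := by
  induction Xs with
  | nil => exact .nil
  | cons X Xs ih => exact .cons (v := [_]) (.leaf X) ih

theorem args_append_map_leaf (h : Trace R (args Xs) (q ++ Xs.map Tok.leaf)) :
    q = [] ∨ ∃ X u, q = u ++ [call X] ∧ Trace R (state none) (call X :: u) := by
  induction Xs generalizing q with
  | nil =>
    generalize hm : q ++ [].map Tok.leaf = m at h
    cases h
    exact .inl (append_eq_nil_iff.1 hm).1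
  | cons X Xs ih =>
    generalize hw : q ++ (X :: Xs).map Tok.leaf = w at h
    cases h with | @cons _ _ v m hv hm => ?_
    obtain ⟨p, rfl⟩ : Xs.map Tok.leaf <:+ m :=
      suffix_of_suffix_length_le ⟨q ++ [Tok.leaf X], by simpa using hw⟩ (suffix_append v m)
        (by simpa using hm.length_le)
    have hvp : q ++ [Tok.leaf X] = v ++ p := by
      refine append_cancel_right (bs := Xs.map Tok.leaf) ?_
      simpa using hw
    rcases ih hm with rfl | ⟨Y, u, rfl, -⟩
    · obtain rfl : q ++ [Tok.leaf X] = v := by simpa using hvp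
      rcases last_token (v := call X :: q) hv with ⟨_, h⟩ | ⟨_, u, h, hq, hu⟩
      · cases h
      · cases h
        rcases eq_nil_or_concat' q with rfl | ⟨q, s, rfl⟩
        · exact .inl rfl
        · obtain ⟨rfl, hs⟩ := append_inj' (show (call X :: q) ++ [s] = _ from hq) rfl
          exact .inr ⟨X, q, by rw [singleton_inj.1 hs], hu⟩
    · have := append_inj_right' (hvp.trans (append_assoc ..).symm) rfl
      simp at this

-- If the two displayed calls differ, then that on the left lies in `m`, and the trace that starts
-- with the call on the right and ends just before the other one is balanced.
theorem cancel_leaves (hz : Trace R (state (some r)) z) (hm : Trace R (args r.2) m)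
    (h : x ++ call (.inr r.1) :: r.2.map Tok.leaf = z ++ call (.inr r.1) :: m) :
    Trace R (state (some r)) x := by
  rcases append_eq_append_iff.1 h with ⟨c, rfl, hc⟩ | ⟨c, rfl, hc⟩
  · have hlen := congrArg length hc
    have hXs_le := hm.length_le
    simp only [length_append, length_cons, length_map] at hlen
    obtain rfl : c = [] := length_eq_zero_iff.1 (by omega)
    simpa using hz
  · rcases c with - | ⟨t, p⟩
    · simpa using hz
    · obtain ⟨rfl, rfl⟩ := cons_eq_cons.1 hc
      have hm' : Trace R (args r.2) ((p ++ [call (.inr r.1)]) ++ r.2.map Tok.leaf) := by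
        simpa using hm
      rcases hm'.args_append_map_leaf with h | ⟨X, u, h, hu⟩
      · simp at h
      · obtain ⟨rfl, hX⟩ := append_inj' h rfl
        rw [← singleton_inj.1 hX] at hu
        exact hz.append hu.pending

end Trace

/-- `Yields v w` means that the trace `v` consists of the letters of `w`, supplied in this order,
and of applications of productions. -/
inductive Yields : List (Tok α κ) → List α → Prop
  | nil : Yields [] []
  | leaf {a : α} {v : List (Tok α κ)} {w : List α} :
      Yields v w → Yields (leaf (.inl a) :: v) (a :: w)
  | fire {r : Production α κ} {v : List (Tok α κ)} {w : List α} :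
      Yields v w → Yields (fire r :: v) w

namespace Yields

variable {u v : List (Tok α κ)} {w : List α}

theorem split (h : Yields (u ++ v) w) : ∃ w₁ w₂, Yields u w₁ ∧ Yields v w₂ ∧ w₁ ++ w₂ = w := by
  induction u generalizing w with
  | nil => exact ⟨[], w, .nil, h, rfl⟩
  | cons t u ih =>
    cases h with
    | leaf h =>
      obtain ⟨w₁, w₂, h₁, h₂, rfl⟩ := ih h
      exact ⟨_, w₂, .leaf h₁, h₂, rfl⟩
    | fire h =>
      obtain ⟨w₁, w₂, h₁, h₂, rfl⟩ := ih h
      exact ⟨_, w₂, .fire h₁, h₂, rfl⟩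

theorem map_fire_append (rs : List (Production α κ)) (h : Yields v w) :
    Yields (rs.map Tok.fire ++ v) w := by
  induction rs with
  | nil => exact h
  | cons r rs ih => exact .fire ih

theorem of_append_fire (h : Yields (v ++ [Tok.fire r]) w) : Yields v w := by
  obtain ⟨_, _, hv, hr, rfl⟩ := h.split
  cases hr with | fire hr => ?_
  cases hr
  simpa using hv

end Yields

/-- The tokens of a block: the letter `a` followed by applications of the productions `rs`. -/
def blockTokens (rs : List (Production α κ)) (a : α) : List (Tok α κ) :=
  leaf (.inl a) :: rs.map fire

theorem yields_flatMap_blockTokens (rs : List (Production α κ)) (w : List α) :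
    Yields (w.flatMap (blockTokens rs)) w := by
  induction w with
  | nil => exact .nil
  | cons a w ih => exact .leaf (.map_fire_append rs ih)

/-- What a trace of a given kind says about the words yielded by its parts. -/
def Adequate (R : List (Production α κ)) : TraceKind α κ → List (Tok α κ) → Prop
  | state _, v => (∀ w, Yields v w → w = []) ∧
      ∀ X u w, v = call X :: u → Yields u w → Gen R [X] w
  | args Xs, m => ∀ w, Yields m w → Gen R Xs w

theorem Adequate.append {u v : List (Tok α κ)} (hu : Adequate R (state o) u)
    (hv : Adequate R (state o) v) : Adequate R (state o) (u ++ v) := by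
  constructor
  · intro w h
    obtain ⟨_, _, h₁, h₂, rfl⟩ := h.split
    rw [hu.1 _ h₁, hv.1 _ h₂, append_nil]
  · intro X m w huv h
    rcases append_eq_cons_iff.1 huv with ⟨rfl, rfl⟩ | ⟨u, rfl, rfl⟩
    · exact hv.2 X m w rfl h
    · obtain ⟨_, _, h₁, h₂, rfl⟩ := h.split
      rw [hv.1 _ h₂, append_nil]
      exact hu.2 X u _ rfl h₁

theorem Adequate.fire {v : List (Tok α κ)} (hv : Adequate R (state (some r)) v) :
    Adequate R (state none) (v ++ [fire r]) := by
  constructor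
  · exact fun w h => hv.1 w h.of_append_fire
  · intro X m w hvm h
    rcases append_eq_cons_iff.1 hvm with ⟨-, h⟩ | ⟨u, rfl, rfl⟩
    · simp at h
    · exact hv.2 X u w rfl h.of_append_fire

theorem Trace.adequate {k : TraceKind α κ} {v : List (Tok α κ)} (h : Trace R k v) :
    Adequate R k v := by
  induction h with
  | empty =>
    refine ⟨fun _ h => ?_, fun X u w hu => absurd hu (cons_ne_nil (call X) u).symm⟩
    cases h
    rfl
  | leaf X =>
    refine ⟨fun _ h => (nomatch h), fun Y u w hu h => ?_⟩
    cases hu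
    cases h with | @leaf a _ _ h => ?_
    cases h
    exact .letters [a]
  | fire _ ih => exact ih.fire
  | append _ _ ih₁ ih₂ => exact ih₁.append ih₂
  | pending _ ih => exact ih
  | body hr _ ih =>
    refine ⟨fun _ h => (nomatch h), fun X u w hu h => ?_⟩
    cases hu
    exact .of_production hr (ih w h)
  | nil =>
    intro w h
    cases h
    exact .nil
  | cons _ _ ih₁ ih₂ =>
    intro w h
    obtain ⟨_, _, h₁, h₂, rfl⟩ := h.split
    exact (ih₁.2 _ _ _ rfl h₁).append (ih₂ _ h₂)

end Traces

section Soundness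

variable {α κ : Type*} [Encodable α] [Encodable κ] {R : List (Production α κ)}
  {r : Production α κ}

open Tok TraceKind

/-- The valuation by traces: `start` denotes the balanced traces and `code X` the token `call X`. -/
def traceVal (R : List (Production α κ)) : ℕ → Language (Tok α κ)
  | 0 => {v | Trace R (state none) v}
  | n + 1 => {v | ∃ X, Encodable.encode X = n ∧ v = [call X]}

theorem sem_traceVal_code (X : α ⊕ κ) : sem (traceVal R) (code X) = {[call X]} := by
  refine Set.ext fun v => ⟨?_, ?_⟩
  · rintro ⟨Y, hY, rfl⟩
    rw [Encodable.encode_injective hY]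
    rfl
  · rintro rfl
    exact ⟨X, rfl, rfl⟩

theorem mem_sem_traceVal_hat {X : α ⊕ κ} {v : List (Tok α κ)} :
    v ∈ sem (traceVal R) (hat X) ↔ Trace R (state none) (call X :: v) := by
  have hcall : [call X] ∈ sem (traceVal R) (code X) := by
    rw [sem_traceVal_code]
    rfl
  constructor
  · exact fun h => h _ (Language.append_mem_mul (a := []) Trace.empty hcall)
  · rintro h _ ⟨u, hu, c, hc, rfl⟩
    obtain rfl : c = [call X] := (sem_traceVal_code (R := R) X).le hc
    have huv : Trace R (state none) (u ++ call X :: v) := Trace.append hu h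
    rwa [append_cons] at huv

theorem mem_prod_sem_traceVal_hat {Xs : List (α ⊕ κ)} {m : List (Tok α κ)} :
    m ∈ ((Xs.map hat).map (sem (traceVal R))).prod ↔ Trace R (args Xs) m := by
  induction Xs generalizing m with
  | nil =>
    constructor
    · rintro rfl
      exact .nil
    · rintro ⟨⟩
      rfl
  | cons X Xs ih =>
    constructor
    · rintro ⟨v, hv, m, hm, rfl⟩
      exact .cons (mem_sem_traceVal_hat.1 hv) (ih.1 hm)
    · intro h
      cases h with | cons hv hm => ?_
      exact Language.append_mem_mul (mem_sem_traceVal_hat.2 hv) (ih.2 hm)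

theorem mem_sem_traceVal_body {v : List (Tok α κ)} :
    v ∈ sem (traceVal R) (body r) ↔ ∃ m, Trace R (args r.2) m ∧ v = call (.inr r.1) :: m := by
  rw [body, sem_foldl_mul, sem_traceVal_code]
  constructor
  · rintro ⟨_, rfl, m, hm, rfl⟩
    exact ⟨m, mem_prod_sem_traceVal_hat.1 hm, rfl⟩
  · rintro ⟨m, hm, rfl⟩
    exact Language.append_mem_mul (a := [_]) rfl (mem_prod_sem_traceVal_hat.2 hm)

theorem sem_traceVal_start_mul_pow_le (hr : r ∈ R) (n : ℕ) :
    sem (traceVal R) start * sem (traceVal R) (body r) ^ n ≤ {v | Trace R (state (some r)) v} := by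
  induction n with
  | zero =>
    rw [pow_zero, mul_one]
    exact fun _ => Trace.pending
  | succ n ih =>
    rw [pow_succ, ← mul_assoc]
    rintro _ ⟨z, hz, b, hb, rfl⟩
    obtain ⟨m, hm, rfl⟩ := mem_sem_traceVal_body.1 hb
    exact Trace.append (ih hz) (.body hr hm)

theorem fire_mem_sem_traceVal_trig (hr : r ∈ R) : [fire r] ∈ sem (traceVal R) (trig r) := by
  intro x hx
  -- The residual is tested on the constituents of `r` supplied as leaves.
  have hmem : x ++ call (.inr r.1) :: r.2.map leaf ∈
      sem (traceVal R) start * pos (sem (traceVal R) (body r)) :=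
    hx _ (mem_sem_traceVal_body.2 ⟨_, .args_map_leaf r.2, rfl⟩)
  rw [pos, Language.mul_iSup, Language.mem_iSup] at hmem
  obtain ⟨n, hn⟩ := hmem
  rw [pow_succ, ← mul_assoc] at hn
  obtain ⟨z, hz, b, hb, h⟩ := hn
  obtain ⟨m, hm, rfl⟩ := mem_sem_traceVal_body.1 hb
  exact .fire (.cancel_leaves (sem_traceVal_start_mul_pow_le hr n hz) hm h.symm)

theorem blockTokens_mem_sem_traceVal {rs : List (Production α κ)} (hrs : rs ⊆ R) (a : α) :
    blockTokens rs a ∈ sem (traceVal R) (blockFm rs a) := by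
  rw [blockFm, sem_foldl_mul, map_map]
  exact Language.append_mem_mul (a := [_]) (mem_sem_traceVal_hat.2 (.leaf (.inl a)))
    (map_mem_prod fun r hr => fire_mem_sem_traceVal_trig (hrs hr))

theorem flatMap_blockTokens_mem_sem_traceVal {rs R : List (Production Bool κ)} (hrs : rs ⊆ R)
    {w : List Bool} (hw : w ∈ AltLang) :
    w.flatMap (blockTokens rs) ∈ sem (traceVal R) (.plus (groupFm rs)) := by
  have hle (a : Bool) : ({blockTokens rs a} : Language _) ≤ sem (traceVal R) (blockFm rs a) :=
    Set.singleton_subset_iff.2 (blockTokens_mem_sem_traceVal hrs a)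
  exact pos_mono (mul_le_mul' (pos_mono (hle false)) (pos_mono (hle true)))
    (exists_mem_altLang_flatMap_iff.1 ⟨w, hw, rfl⟩)

theorem altLang_subset_of_derLw {G : CFG} (h : DerLw (toSequent G).1 (toSequent G).2) :
    AltLang ⊆ Lang G := by
  intro w hw
  set R := rightCorner G.2
  have hw' : w.flatMap (blockTokens (rounds R 4)) ∈
      ([.plus (groupFm (rounds R 4))].map (sem (traceVal R))).prod := by
    rw [map_singleton, prod_singleton]
    exact flatMap_blockTokens_mem_sem_traceVal (rounds_subset R 4) hw
  have htrace : Trace R (state none)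
      (call (sym (.inr G.1)) :: w.flatMap (blockTokens (rounds R 4))) :=
    sem_sound (traceVal R) h (Language.append_mem_mul (a := []) Trace.empty
      (Language.append_mem_mul (a := [_]) ⟨_, rfl, rfl⟩ hw'))
  have hgen : Gen R [sym (.inr G.1)] w :=
    htrace.adequate.2 _ _ _ rfl (yields_flatMap_blockTokens _ w)
  exact mem_lang_iff.2 hgen.of_rightCorner

end Soundness

section Computability

variable {α κ σ : Type*} [Primcodable α] [Primcodable κ] [Primcodable σ]

theorem encodeFm_foldl_mul (F : Fm) (Fs : List Fm) :
    encodeFm (Fs.foldl .mul F) =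
      (Fs.map encodeFm).foldl (fun a b => Nat.pair 1 (Nat.pair a b)) (encodeFm F) := by
  induction Fs generalizing F with
  | nil => rfl
  | cons _ _ ih => exact ih _

theorem primrec_pair_const {f : σ → ℕ} (n : ℕ) (hf : Primrec f) :
    Primrec fun a => Nat.pair n (f a) :=
  Primrec₂.natPair.comp (.const n) hf

theorem primrec_pair_pair {f g : σ → ℕ} (n : ℕ) (hf : Primrec f) (hg : Primrec g) :
    Primrec fun a => Nat.pair n (Nat.pair (f a) (g a)) :=
  primrec_pair_const n (Primrec₂.natPair.comp hf hg)

theorem primrec_encodeFm_foldl_mul {ι : Type*} [Primcodable ι] {F : σ → Fm} {l : σ → List ι}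
    {g : ι → Fm} (hF : Primrec fun a => encodeFm (F a)) (hl : Primrec l)
    (hg : Primrec fun i => encodeFm (g i)) :
    Primrec fun a => encodeFm (((l a).map g).foldl .mul (F a)) := by
  simp only [encodeFm_foldl_mul, map_map]
  exact Primrec.list_foldl (h := fun _ p => Nat.pair 1 (Nat.pair p.1 p.2))
    (Primrec.list_map hl (hg.comp .snd).to₂) hF
    (primrec_pair_pair 1 (Primrec.fst.comp .snd) (Primrec.snd.comp .snd))

theorem primrec_code : Primrec fun X : α ⊕ κ => encodeFm (code X) :=
  primrec_pair_const 0 (Primrec.succ.comp .encode)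

theorem primrec_hat : Primrec fun X : α ⊕ κ => encodeFm (hat X) :=
  primrec_pair_pair 2 (primrec_pair_pair 1 (.const (encodeFm start)) primrec_code)
    (.const (encodeFm start))

theorem primrec_body : Primrec fun r : Production α κ => encodeFm (body r) :=
  primrec_encodeFm_foldl_mul (primrec_code.comp (Primrec.sumInr.comp .fst)) .snd primrec_hat

theorem primrec_trig : Primrec fun r : Production α κ => encodeFm (trig r) :=
  primrec_pair_pair 2 (primrec_pair_pair 3 (primrec_pair_pair 1 (.const (encodeFm start))
    (primrec_pair_const 4 primrec_body)) primrec_body) (.const (encodeFm start))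

theorem primrec_blockFm (a : α) :
    Primrec fun rs : List (Production α κ) => encodeFm (blockFm rs a) :=
  primrec_encodeFm_foldl_mul (.const (encodeFm (hat (.inl a : α ⊕ κ)))) .id primrec_trig

theorem primrec_groupFm :
    Primrec fun rs : List (Production Bool κ) => encodeFm (groupFm rs) :=
  primrec_pair_pair 1 (primrec_pair_const 4 (primrec_blockFm false))
    (primrec_pair_const 4 (primrec_blockFm true))

theorem primrec_allOrders : Primrec (allOrders : List (Production α κ) → _) :=
  Primrec.list_foldr .id (.const []) (Primrec.list_append.comp (Primrec.snd.comp .snd)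
    (Primrec.list_cons.comp (Primrec.fst.comp .snd) (Primrec.snd.comp .snd))).to₂

theorem primrec_rounds (k : ℕ) : Primrec fun R : List (Production α κ) => rounds R k := by
  induction k with
  | zero => exact .const []
  | succ k ih =>
    simp only [rounds_succ]
    exact Primrec.list_append.comp ih primrec_allOrders

theorem primrec_splitLast : Primrec (splitLast : List (Production α κ) → _) := by
  have hlast : Primrec fun l : List (α ⊕ κ) => l.getLast? := by
    simp only [getLast?_eq_head?_reverse]
    exact Primrec.list_head?.comp .list_reverse
  have hinit : Primrec fun l : List (α ⊕ κ) => l.dropLast :=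
    (Primrec.list_reverse.comp (Primrec.list_tail.comp .list_reverse)).of_eq fun l => by
      rw [tail_reverse, reverse_reverse]
  exact Primrec.listFilterMap .id (Primrec.option_map (hlast.comp (Primrec.snd.comp .snd))
    ((Primrec.fst.comp (Primrec.snd.comp .fst)).pair
      ((hinit.comp (Primrec.snd.comp (Primrec.snd.comp .fst))).pair .snd)).to₂).to₂

theorem primrec_sym : Primrec (sym : α ⊕ κ → α ⊕ RCNonterminal α κ) :=
  (Primrec.sumCasesOn .id (Primrec.sumInl.comp .snd).to₂
    (Primrec.sumInr.comp (Primrec.sumInl.comp .snd)).to₂).of_eq fun X => by cases X <;> rfl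

theorem primrec_slash {f : σ → κ} {g : σ → α ⊕ κ} (hf : Primrec f) (hg : Primrec g) :
    Primrec fun a => slash (f a) (g a) :=
  Primrec.sumInr.comp (Primrec.sumInr.comp (hf.pair hg))

theorem primrec_rightCorner : Primrec (rightCorner : List (Production α κ) → _) := by
  have hβ : Primrec fun t : κ × List (α ⊕ κ) × (α ⊕ κ) => t.2.1.map sym :=
    Primrec.list_map (Primrec.fst.comp .snd) (primrec_sym.comp .snd).to₂
  have hX : Primrec fun t : κ × List (α ⊕ κ) × (α ⊕ κ) => t.2.2 := Primrec.snd.comp .snd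
  have hlift : Primrec fun t : κ × List (α ⊕ κ) × (α ⊕ κ) =>
      ((.inl t.1, t.2.1.map sym ++ [sym t.2.2]) : Production α (RCNonterminal α κ)) :=
    (Primrec.sumInl.comp .fst).pair
      (Primrec.list_append.comp hβ (Primrec.list_cons.comp (primrec_sym.comp hX) (.const [])))
  have hopen : Primrec fun t : κ × List (α ⊕ κ) × (α ⊕ κ) =>
      ((.inr (t.1, t.2.2), t.2.1.map sym) : Production α (RCNonterminal α κ)) :=
    (Primrec.sumInr.comp (Primrec.fst.pair hX)).pair hβ
  have hclose : Primrec fun p : (κ × List (α ⊕ κ) × (α ⊕ κ)) × κ =>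
      ((.inl p.2, [slash p.2 p.1.2.2, sym p.1.2.2]) : Production α (RCNonterminal α κ)) :=
    (Primrec.sumInl.comp .snd).pair (Primrec.list_cons.comp (primrec_slash .snd (hX.comp .fst))
      (Primrec.list_cons.comp (primrec_sym.comp (hX.comp .fst)) (.const [])))
  have hextend : Primrec fun p : (κ × List (α ⊕ κ) × (α ⊕ κ)) × κ =>
      ((.inr (p.2, p.1.2.2), slash p.2 (.inr p.1.1) :: p.1.2.1.map sym) :
        Production α (RCNonterminal α κ)) :=
    (Primrec.sumInr.comp (Primrec.snd.pair (hX.comp .fst))).pair (Primrec.list_cons.comp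
      (primrec_slash .snd (Primrec.sumInr.comp (Primrec.fst.comp .fst))) (hβ.comp .fst))
  have hpair : Primrec fun p : (κ × List (α ⊕ κ) × (α ⊕ κ)) × κ =>
      ([(.inl p.2, [slash p.2 p.1.2.2, sym p.1.2.2]),
        (.inr (p.2, p.1.2.2), slash p.2 (.inr p.1.1) :: p.1.2.1.map sym)] :
        List (Production α (RCNonterminal α κ))) :=
    Primrec.list_cons.comp hclose (Primrec.list_cons.comp hextend (.const []))
  exact Primrec.list_flatMap primrec_splitLast (Primrec.list_cons.comp (hlift.comp .snd)
    (Primrec.list_cons.comp (hopen.comp .snd) (Primrec.list_flatMap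
      (Primrec.list_map .fst (Primrec.fst.comp .snd).to₂)
      (hpair.comp ((Primrec.snd.comp .fst).pair .snd)).to₂))).to₂

theorem primrec_encodeSeq_toSequent : Primrec fun G => encodeSeq (toSequent G) := by
  have hstart : Primrec fun G : CFG =>
      encodeFm (code (sym (.inr G.1) : Bool ⊕ RCNonterminal Bool ℕ)) :=
    primrec_code.comp (primrec_sym.comp (Primrec.sumInr.comp .fst))
  have hgroup : Primrec fun G : CFG =>
      encodeFm (.plus (groupFm (rounds (rightCorner G.2) 4))) :=
    primrec_pair_const 4
      (primrec_groupFm.comp ((primrec_rounds 4).comp (primrec_rightCorner.comp .snd)))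
  exact Primrec₂.natPair.comp (Primrec.encode.comp
    (Primrec.list_cons.comp (.const (encodeFm start)) (Primrec.list_cons.comp hstart
      (Primrec.list_cons.comp hgroup (.const []))))) (.const (encodeFm start))

theorem exists_computable_encode {f : σ → ℕ} (hf : Primrec f) :
    ∃ F : ℕ → ℕ, Computable F ∧ ∀ a, F (Encodable.encode a) = f a := by
  refine ⟨fun n => Option.casesOn (Encodable.decode (α := σ) n) 0 f, ?_, fun a => ?_⟩
  · exact (Primrec.option_casesOn .decode (.const 0) (hf.comp .snd).to₂).to_comp
  · simp only [Encodable.encodek]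

end Computability

end AltReduction

/-- There is a computable function `f` from ε-free context-free grammars over
`{b, c}` to sequents such that the language of `G` includes `(b⁺c⁺)⁺` iff
`f G` is derivable in L⁺_ω. -/
theorem alt_reduces_to_derivability :
    ∃ f : CFG → List Fm × Fm,
      (∃ F : ℕ → ℕ, Computable F ∧
        ∀ G : CFG, F (Encodable.encode G) = encodeSeq (f G)) ∧
      ∀ G : CFG, EpsFree G →
        (AltLang ⊆ Lang G ↔ DerLw (f G).1 (f G).2) :=
  ⟨AltReduction.toSequent,
    AltReduction.exists_computable_encode AltReduction.primrec_encodeSeq_toSequent,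
    fun _ hG => ⟨AltReduction.derLw_toSequent hG, AltReduction.altLang_subset_of_derLw⟩⟩
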